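/- arXiv:2201.06145 — 2 statements merged into one kernel-verified Lean document; each statement's English description precedes it below -/
import Mathlib

section
/- Let K ⊆ ℝ² be a compact convex set with nonempty interior. Then there exists a 1-periodic Lipschitz curve σ̂ : ℝ → ℝ², injective on [0,1), such that σ̂([0,1]) = ∂K and σ̂(t) = σ̂(0) + ℓ ∫₀ᵗ (cos θ̂(s), sin θ̂(s)) ds for all t ∈ [0,1], where ℓ > 0 is the length of σ̂ and θ̂ : ℝ → ℝ is a nondecreasing function satisfying θ̂(t+1) − θ̂(t) = 2π for all t ∈ ℝ. -/
open Set MeasureTheory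
open scoped NNReal

noncomputable abbrev dirVec (θ : ℝ → ℝ) (s : ℝ) : EuclideanSpace ℝ (Fin 2) :=
  (EuclideanSpace.equiv (Fin 2) ℝ).symm ![Real.cos (θ s), Real.sin (θ s)]

/-!
Seen from an interior point `p`, the boundary of `K` is a curve `p + r x • unitVec x` with polar
angle `x`, where `r` is the inverse of the gauge. At every `x` a supporting line has an outer normal
of some direction `α x`, and `α` is nondecreasing by convexity. Where `α` is continuous, that is,
off a countable set, the outer normal is a continuous selection of subgradients of the gauge, so
the curve is differentiable with direction `unitVec (α x + π / 2)`. Reparametrizing by arc length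
makes the speed constant, and the fundamental theorem of calculus, which tolerates a countable
exceptional set, gives the integral formula.
-/

open Filter Topology
open scoped RealInnerProductSpace Real

section UnitVec

/-- The unit vector of the Euclidean plane with polar angle `x`, so that
`dirVec θ s = unitVec (θ s)`. -/
noncomputable def unitVec (x : ℝ) : EuclideanSpace ℝ (Fin 2) :=
  !₂[Real.cos x, Real.sin x]

lemma inner_unitVec (x y : ℝ) : ⟪unitVec x, unitVec y⟫ = Real.cos (x - y) := by
  rw [PiLp.inner_apply, Fin.sum_univ_two, Real.cos_sub]
  simp [unitVec, mul_comm]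

lemma norm_unitVec (x : ℝ) : ‖unitVec x‖ = 1 := by
  rw [norm_eq_sqrt_real_inner, inner_unitVec, sub_self, Real.cos_zero, Real.sqrt_one]

lemma unitVec_ne_zero (x : ℝ) : unitVec x ≠ 0 :=
  norm_ne_zero_iff.1 (by simp [norm_unitVec])

lemma unitVec_periodic : Function.Periodic unitVec (2 * π) := fun x => by
  simp [unitVec]

lemma unitVec_add (x y : ℝ) :
    unitVec (x + y) = Real.cos y • unitVec x + Real.sin y • unitVec (x + π / 2) := by
  ext i
  fin_cases i
  · simp [unitVec, Real.cos_add x, mul_comm, sub_eq_add_neg]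
  · simp [unitVec, Real.sin_add x, mul_comm]

lemma unitVec_add_pi (x : ℝ) : unitVec (x + π) = -unitVec x := by
  rw [unitVec_add, Real.cos_pi, Real.sin_pi, zero_smul, add_zero, neg_one_smul]

lemma hasDerivAt_unitVec (x : ℝ) : HasDerivAt unitVec (unitVec (x + π / 2)) x := by
  have hexpand (y : ℝ) :
      unitVec y = Real.cos y • unitVec 0 + Real.sin y • unitVec (π / 2) := by
    simpa only [zero_add] using unitVec_add 0 y
  rw [hexpand (x + π / 2), Real.cos_add_pi_div_two, Real.sin_add_pi_div_two]
  exact (((Real.hasDerivAt_cos x).smul_const _).add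
    ((Real.hasDerivAt_sin x).smul_const _)).congr_of_eventuallyEq (Eventually.of_forall hexpand)

lemma continuous_unitVec : Continuous unitVec :=
  continuous_iff_continuousAt.2 fun x => (hasDerivAt_unitVec x).continuousAt

lemma unitVec_eq_unitVec_iff {x y : ℝ} :
    unitVec x = unitVec y ↔ (x : Real.Angle) = (y : Real.Angle) := by
  refine ⟨fun h => Real.Angle.cos_sin_inj ?_ ?_, fun h => ?_⟩
  · exact congrArg (fun v => v 0) h
  · exact congrArg (fun v => v 1) h
  · simp only [unitVec, ← Real.Angle.cos_coe, ← Real.Angle.sin_coe, h]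

lemma injOn_unitVec : InjOn unitVec (Ico 0 (2 * π)) := by
  have : Fact (0 < 2 * π) := ⟨Real.two_pi_pos⟩
  intro x hx y hy hxy
  refine (AddCircle.coe_eq_coe_iff_of_mem_Ico (p := 2 * π) (a := 0) ?_ ?_).1
    (unitVec_eq_unitVec_iff.1 hxy)
  · simpa using hx
  · simpa using hy

lemma exists_eq_norm_smul_unitVec (v : EuclideanSpace ℝ (Fin 2)) :
    ∃ φ : ℝ, v = ‖v‖ • unitVec φ := by
  let z : ℂ := ⟨v 0, v 1⟩
  have hz : ‖z‖ = ‖v‖ := by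
    rw [EuclideanSpace.norm_eq, Complex.norm_eq_sqrt_sq_add_sq, Fin.sum_univ_two]
    simp [z]
  refine ⟨z.arg, ?_⟩
  ext i
  fin_cases i
  · simp [unitVec, ← hz, Complex.norm_mul_cos_arg, z]
  · simp [unitVec, ← hz, Complex.norm_mul_sin_arg, z]

lemma injOn_smul_unitVec {r : ℝ → ℝ} (hr : ∀ x, 0 < r x) :
    InjOn (fun x => r x • unitVec x) (Ico 0 (2 * π)) := by
  intro x hx y hy hxy
  have hrxy : r x = r y := by
    simpa [norm_smul, norm_unitVec, abs_of_pos (hr _)] using congrArg norm hxy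
  refine injOn_unitVec hx hy (smul_right_injective _ (hr y).ne' ?_)
  simpa only [hrxy] using hxy

end UnitVec

section Support

lemma exists_normal_of_notMem_interior {E : Type*} [NormedAddCommGroup E]
    [InnerProductSpace ℝ E] [CompleteSpace E] {K : Set E} (hK : Convex ℝ K) {p z : E}
    (hp : p ∈ interior K) (hz : z ∉ interior K) :
    ∃ ν : E, ⟪ν, p⟫ < ⟪ν, z⟫ ∧ ∀ w ∈ K, ⟪ν, w⟫ ≤ ⟪ν, z⟫ := by
  obtain ⟨f, hf, hle⟩ := geometric_hahn_banach_of_nonempty_interior_point hK hz ⟨p, hp⟩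
  have hlt : f p < f z := by
    refine (hle p (interior_subset hp)).lt_of_ne fun heq => hf ?_
    have hmax : IsLocalMax f p := by
      filter_upwards [mem_interior_iff_mem_nhds.1 hp] with w hw
      exact (hle w hw).trans_eq heq.symm
    exact hmax.hasFDerivAt_eq_zero f.hasFDerivAt
  refine ⟨(InnerProductSpace.toDual ℝ E).symm f, ?_, ?_⟩
  · simpa using hlt
  · simpa using hle

lemma exists_normal_angle {K : Set (EuclideanSpace ℝ (Fin 2))} (hK : Convex ℝ K)
    {p z : EuclideanSpace ℝ (Fin 2)} (hp : p ∈ interior K) (hz : z ∉ interior K) :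
    ∃ φ : ℝ, ⟪unitVec φ, p⟫ < ⟪unitVec φ, z⟫ ∧ ∀ w ∈ K, ⟪unitVec φ, w⟫ ≤ ⟪unitVec φ, z⟫ := by
  obtain ⟨ν, hlt, hle⟩ := exists_normal_of_notMem_interior hK hp hz
  obtain ⟨φ, hφ⟩ := exists_eq_norm_smul_unitVec ν
  have hν : 0 < ‖ν‖ := norm_pos_iff.2 (by rintro rfl; simp at hlt)
  rw [hφ] at hlt hle
  simp only [real_inner_smul_left] at hlt hle
  exact ⟨φ, lt_of_mul_lt_mul_left hlt hν.le, fun w hw => le_of_mul_le_mul_left (hle w hw) hν⟩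

/-- The real number congruent to `φ` modulo `2π` that is nearest to `x`. -/
noncomputable def nearestAngle (x φ : ℝ) : ℝ :=
  x + ((φ : Real.Angle) - (x : Real.Angle)).toReal

lemma unitVec_nearestAngle (x φ : ℝ) : unitVec (nearestAngle x φ) = unitVec φ := by
  simp [unitVec_eq_unitVec_iff, nearestAngle]

lemma nearestAngle_add_two_pi (x φ : ℝ) :
    nearestAngle (x + 2 * π) φ = nearestAngle x φ + 2 * π := by
  simp only [nearestAngle, Real.Angle.coe_add, Real.Angle.coe_two_pi, add_zero]
  ring

lemma abs_nearestAngle_sub_lt_iff (x φ : ℝ) :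
    |nearestAngle x φ - x| < π / 2 ↔ 0 < Real.cos (φ - x) := by
  rw [nearestAngle, add_sub_cancel_left, ← Real.Angle.cos_pos_iff_abs_toReal_lt_pi_div_two,
    ← Real.Angle.coe_sub, Real.Angle.cos_coe]

end Support

section Radial

variable {E : Type*} [NormedAddCommGroup E] [NormedSpace ℝ E] {K : Set E}

lemma inv_gauge_smul_mem_frontier (hK : Convex ℝ K) (h0 : K ∈ 𝓝 0) {u : E}
    (hu : 0 < gauge K u) : (gauge K u)⁻¹ • u ∈ frontier K := by
  rw [← gauge_eq_one_iff_mem_frontier hK h0, gauge_smul_of_nonneg (inv_nonneg.2 hu.le),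
    smul_eq_mul, inv_mul_cancel₀ hu.ne']

lemma gauge_pos_of_isBounded (h0 : K ∈ 𝓝 0) (hb : Bornology.IsBounded K) {u : E} (hu : u ≠ 0) :
    0 < gauge K u :=
  (gauge_pos (absorbent_nhds_zero h0) ((NormedSpace.isVonNBounded_iff ℝ).2 hb)).2 hu

end Radial

/-- The distance from the origin to `frontier K` in the direction `unitVec x`, for `K` a bounded
convex neighbourhood of the origin. -/
noncomputable def polarRadius (K : Set (EuclideanSpace ℝ (Fin 2))) (x : ℝ) : ℝ :=
  (gauge K (unitVec x))⁻¹

section Radius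

variable {K : Set (EuclideanSpace ℝ (Fin 2))}

lemma polarRadius_pos (h0 : K ∈ 𝓝 0) (hb : Bornology.IsBounded K) (x : ℝ) : 0 < polarRadius K x :=
  inv_pos.2 (gauge_pos_of_isBounded h0 hb (unitVec_ne_zero x))

lemma polarRadius_periodic (K : Set (EuclideanSpace ℝ (Fin 2))) :
    Function.Periodic (polarRadius K) (2 * π) := fun x => by
  rw [polarRadius, unitVec_periodic x, polarRadius]

lemma continuous_polarRadius (hK : Convex ℝ K) (h0 : K ∈ 𝓝 0) (hb : Bornology.IsBounded K) :
    Continuous (polarRadius K) :=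
  ((continuous_gauge hK h0).comp continuous_unitVec).inv₀ fun x =>
    (gauge_pos_of_isBounded h0 hb (unitVec_ne_zero x)).ne'

lemma polarRadius_smul_unitVec_mem_frontier (hK : Convex ℝ K) (h0 : K ∈ 𝓝 0)
    (hb : Bornology.IsBounded K) (x : ℝ) : polarRadius K x • unitVec x ∈ frontier K :=
  inv_gauge_smul_mem_frontier hK h0 (gauge_pos_of_isBounded h0 hb (unitVec_ne_zero x))

lemma range_polarRadius_smul_unitVec (hK : Convex ℝ K) (h0 : K ∈ 𝓝 0)
    (hb : Bornology.IsBounded K) : range (fun x => polarRadius K x • unitVec x) = frontier K := by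
  refine (range_subset_iff.2 (polarRadius_smul_unitVec_mem_frontier hK h0 hb)).antisymm ?_
  intro z hz
  obtain ⟨φ, hφ⟩ := exists_eq_norm_smul_unitVec z
  have hgauge : ‖z‖ * gauge K (unitVec φ) = 1 := by
    rw [← smul_eq_mul, ← gauge_smul_of_nonneg (norm_nonneg z), ← hφ,
      gauge_eq_one_iff_mem_frontier hK h0]
    exact hz
  exact ⟨φ, by simp only [polarRadius, ← eq_inv_of_mul_eq_one_left hgauge, ← hφ]⟩

end Radius

/-- The curve with polar equation `x ↦ r x • unitVec x` is convex, and `α x` is the direction of an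
outer normal to it at the parameter `x`: the curve lies in the half-plane
`⟪unitVec (α x), ·⟫ ≤ ⟪unitVec (α x), r x • unitVec x⟫`. Among the angles that are congruent
modulo `2π`, the one within `π / 2` of `x` is taken. -/
structure IsPolarNormal (r α : ℝ → ℝ) : Prop where
  radius_pos (x : ℝ) : 0 < r x
  abs_sub_lt (x : ℝ) : |α x - x| < π / 2
  mul_cos_le (x y : ℝ) : r y * Real.cos (α x - y) ≤ r x * Real.cos (α x - x)

theorem exists_isPolarNormal_polarRadius {K : Set (EuclideanSpace ℝ (Fin 2))} (hK : Convex ℝ K)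
    (h0 : K ∈ 𝓝 0) (hc : IsCompact K) :
    ∃ α : ℝ → ℝ, IsPolarNormal (polarRadius K) α ∧ ∀ x, α (x + 2 * π) = α x + 2 * π := by
  have hinner (φ x : ℝ) :
      ⟪unitVec φ, polarRadius K x • unitVec x⟫ = polarRadius K x * Real.cos (φ - x) := by
    rw [real_inner_smul_right, inner_unitVec]
  have hmem := polarRadius_smul_unitVec_mem_frontier hK h0 hc.isBounded
  have hnormal (z : EuclideanSpace ℝ (Fin 2)) (hz : z ∉ interior K) :=
    exists_normal_angle hK (mem_interior_iff_mem_nhds.2 h0) hz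
  -- The normal is chosen as a function of the point, not of `x`: this makes `α - id` periodic.
  choose! φ hlt hle using hnormal
  refine ⟨fun x => nearestAngle x (φ (polarRadius K x • unitVec x)),
    ⟨polarRadius_pos h0 hc.isBounded, fun x => ?_, fun x y => ?_⟩, fun x => ?_⟩
  · have hpos := hlt _ (hmem x).2
    rw [inner_zero_right, hinner] at hpos
    exact (abs_nearestAngle_sub_lt_iff _ _).2
      (pos_of_mul_pos_right hpos (polarRadius_pos h0 hc.isBounded x).le)
  · rw [← hinner, ← hinner, unitVec_nearestAngle]
    exact hle _ (hmem x).2 _ (hc.isClosed.frontier_subset (hmem y))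
  · simp only [polarRadius_periodic K x, unitVec_periodic x, nearestAngle_add_two_pi]

theorem exists_isPolarNormal {K : Set (EuclideanSpace ℝ (Fin 2))} (hK : IsCompact K)
    (hconv : Convex ℝ K) {p : EuclideanSpace ℝ (Fin 2)} (hp : p ∈ interior K) :
    ∃ r α : ℝ → ℝ, IsPolarNormal r α ∧ Continuous r ∧ Function.Periodic r (2 * π) ∧
      (∀ x, α (x + 2 * π) = α x + 2 * π) ∧
      range (fun x => p + r x • unitVec x) = frontier K := by
  let e := Homeomorph.addLeft p
  have hK' : IsCompact (e ⁻¹' K) := e.isCompact_preimage.2 hK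
  have hconv' : Convex ℝ (e ⁻¹' K) := hconv.translate_preimage_right p
  have h0 : e ⁻¹' K ∈ 𝓝 0 :=
    e.continuous.continuousAt.preimage_mem_nhds (by simpa [e] using mem_interior_iff_mem_nhds.1 hp)
  obtain ⟨α, hα, hαper⟩ := exists_isPolarNormal_polarRadius hconv' h0 hK'
  refine ⟨polarRadius (e ⁻¹' K), α, hα, continuous_polarRadius hconv' h0 hK'.isBounded,
    polarRadius_periodic _, hαper, ?_⟩
  calc range (fun x => e (polarRadius (e ⁻¹' K) x • unitVec x))
      = e '' frontier (e ⁻¹' K) := by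
        rw [← range_polarRadius_smul_unitVec hconv' h0 hK'.isBounded, ← range_comp]; rfl
    _ = frontier K := by rw [← e.preimage_frontier, e.image_preimage]

-- The error `g z - g y - n y (c z - c y)` lies between `0` and `(n z - n y) (c z - c y)`.
lemma hasDerivAt_of_forall_apply_sub_le {E : Type*} [NormedAddCommGroup E] [NormedSpace ℝ E]
    {c : ℝ → E} {c' : E} {n : ℝ → E →L[ℝ] ℝ} {g : ℝ → ℝ} {x : ℝ} (hc : HasDerivAt c c' x)
    (hn : ContinuousAt n x) (h : ∀ y z, n y (c z - c y) ≤ g z - g y) :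
    HasDerivAt g (n x c') x := by
  have herr : HasDerivAt (fun z => g z - n x (c z)) 0 x := by
    rw [hasDerivAt_iff_isLittleO]
    have hn0 : (fun z => n z - n x) =o[𝓝 x] (fun _ => (1 : ℝ)) :=
      (Asymptotics.isLittleO_one_iff ℝ).2 (tendsto_sub_nhds_zero_iff.2 hn)
    have hsmall : (fun z => ‖n z - n x‖ * ‖c z - c x‖) =o[𝓝 x] fun z => z - x := by
      simpa using hn0.norm_left.mul_isBigO hc.isBigO_sub.norm_left
    refine (Asymptotics.IsBigO.of_bound 1 (Eventually.of_forall fun z => ?_)).trans_isLittleO hsmall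
    have hlower := h x z
    have hupper := h z x
    have hop := (n z - n x).le_of_opNorm_le le_rfl (c z - c x)
    rw [Real.norm_eq_abs] at hop
    have hop' := (le_abs_self _).trans hop
    simp only [sub_apply, map_sub] at hlower hupper hop'
    simp only [smul_zero, sub_zero, one_mul, norm_mul, norm_norm]
    rw [Real.norm_eq_abs, abs_le]
    constructor <;> nlinarith [norm_nonneg (n z - n x), norm_nonneg (c z - c x)]
  simpa [Function.comp_def, Pi.add_def] using
    herr.add ((n x).hasFDerivAt.comp_hasDerivAt x hc)

namespace IsPolarNormal

variable {r α : ℝ → ℝ}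

lemma cos_pos (h : IsPolarNormal r α) (x : ℝ) : 0 < Real.cos (α x - x) :=
  Real.cos_pos_of_mem_Ioo (abs_lt.1 (h.abs_sub_lt x))

-- Multiplying the support inequalities at `x` and at `y` leaves
-- `0 ≤ sin (y - x) * sin (α y - α x)`.
theorem monotone (h : IsPolarNormal r α) : Monotone α := by
  intro x y hxy
  by_contra! hlt
  have hx := abs_lt.1 (h.abs_sub_lt x)
  have hy := abs_lt.1 (h.abs_sub_lt y)
  have hne : x < y := hxy.lt_of_ne (by rintro rfl; exact hlt.false)
  have hcos : 0 < Real.cos (α y - x) := Real.cos_pos_of_mem_Ioo ⟨by linarith, by linarith⟩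
  have hprod : Real.cos (α x - y) * Real.cos (α y - x) ≤
      Real.cos (α x - x) * Real.cos (α y - y) := by
    refine le_of_mul_le_mul_left ?_ (mul_pos (h.radius_pos x) (h.radius_pos y))
    linear_combination mul_le_mul (h.mul_cos_le x y) (h.mul_cos_le y x)
      (mul_pos (h.radius_pos x) hcos).le (mul_pos (h.radius_pos x) (h.cos_pos x)).le
  have hidentity : Real.cos (α x - y) * Real.cos (α y - x) -
      Real.cos (α x - x) * Real.cos (α y - y) = Real.sin (y - x) * Real.sin (α x - α y) := by
    simp only [Real.cos_sub, Real.sin_sub]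
    ring
  have hsin : 0 < Real.sin (y - x) := Real.sin_pos_of_pos_of_lt_pi (by linarith) (by linarith)
  have hsin' : 0 < Real.sin (α x - α y) := Real.sin_pos_of_pos_of_lt_pi (by linarith) (by linarith)
  linarith [mul_pos hsin hsin']

-- `(r x * cos (α x - x))⁻¹ • unitVec (α x)` is a subgradient at `unitVec x` of the gauge, whose
-- value there is `(r x)⁻¹`.
lemma hasDerivAt_inv_radius (h : IsPolarNormal r α) {x : ℝ} (hr : ContinuousAt r x)
    (hα : ContinuousAt α x) :
    HasDerivAt (fun y => (r y)⁻¹)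
      ((r x * Real.cos (α x - x))⁻¹ * Real.sin (α x - x)) x := by
  have hpos (y : ℝ) : 0 < r y * Real.cos (α y - y) := mul_pos (h.radius_pos y) (h.cos_pos y)
  let n : ℝ → EuclideanSpace ℝ (Fin 2) := fun y =>
    (r y * Real.cos (α y - y))⁻¹ • unitVec (α y)
  have hn : ContinuousAt n x := by
    have hdenom : ContinuousAt (fun y => r y * Real.cos (α y - y)) x := by fun_prop
    exact (hdenom.inv₀ (hpos x).ne').smul (continuous_unitVec.continuousAt.comp hα)
  have hinner (y z : ℝ) :
      ⟪n y, unitVec z⟫ = (r y * Real.cos (α y - y))⁻¹ * Real.cos (α y - z) := by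
    rw [real_inner_smul_left, inner_unitVec]
  have hsub (y z : ℝ) : ⟪n y, unitVec z - unitVec y⟫ ≤ (r z)⁻¹ - (r y)⁻¹ := by
    rw [inner_sub_right, hinner, hinner]
    have hself : (r y * Real.cos (α y - y))⁻¹ * Real.cos (α y - y) = (r y)⁻¹ := by
      have := (h.cos_pos y).ne'
      field_simp
    have hother : (r y * Real.cos (α y - y))⁻¹ * Real.cos (α y - z) ≤ (r z)⁻¹ := by
      rw [inv_mul_le_iff₀ (hpos y), ← div_eq_mul_inv, le_div_iff₀ (h.radius_pos z), mul_comm]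
      exact h.mul_cos_le y z
    linarith
  have hn' : ContinuousAt (fun y => innerSL ℝ (n y)) x := by fun_prop
  have hderiv := hasDerivAt_of_forall_apply_sub_le (hasDerivAt_unitVec x) hn' hsub
  rwa [innerSL_apply_apply, hinner, ← sub_sub, Real.cos_sub_pi_div_two] at hderiv

/-- The speed of the curve `x ↦ r x • unitVec x` whose outer normal at `x` has direction `α x`. -/
noncomputable def speed (r α : ℝ → ℝ) (x : ℝ) : ℝ :=
  r x / Real.cos (α x - x)

lemma speed_pos (h : IsPolarNormal r α) (x : ℝ) : 0 < speed r α x :=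
  div_pos (h.radius_pos x) (h.cos_pos x)

lemma speed_periodic (hr : Function.Periodic r (2 * π))
    (hα : ∀ x, α (x + 2 * π) = α x + 2 * π) : Function.Periodic (speed r α) (2 * π) := fun x => by
  rw [speed, speed, hr x, hα x, add_sub_add_right_eq_sub]

lemma continuousAt_speed (h : IsPolarNormal r α) {x : ℝ} (hr : ContinuousAt r x)
    (hα : ContinuousAt α x) : ContinuousAt (speed r α) x :=
  hr.div (by fun_prop) (h.cos_pos x).ne'

theorem hasDerivAt_smul_unitVec (h : IsPolarNormal r α) {x : ℝ} (hr : ContinuousAt r x)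
    (hα : ContinuousAt α x) :
    HasDerivAt (fun y => r y • unitVec y) (speed r α x • unitVec (α x + π / 2)) x := by
  have hcos := (h.cos_pos x).ne'
  have hrx := (h.radius_pos x).ne'
  have hr' : HasDerivAt r (-(speed r α x * Real.sin (α x - x))) x := by
    have hinv := (h.hasDerivAt_inv_radius hr hα).inv (inv_ne_zero hrx)
    simp only [Pi.inv_def, inv_inv] at hinv
    refine hinv.congr_deriv ?_
    rw [speed]
    field_simp
  have hradial : speed r α x * Real.cos (α x - x) = r x := div_mul_cancel₀ _ hcos
  have htangent : unitVec (α x + π / 2) =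
      Real.cos (α x - x) • unitVec (x + π / 2) - Real.sin (α x - x) • unitVec x := by
    rw [show α x + π / 2 = x + π / 2 + (α x - x) by ring, unitVec_add (x + π / 2),
      add_assoc x, add_halves, unitVec_add_pi, smul_neg, ← sub_eq_add_neg]
  refine (hr'.smul (hasDerivAt_unitVec x)).congr_deriv ?_
  rw [htangent, smul_sub, smul_smul, smul_smul, hradial, neg_smul, ← sub_eq_add_neg]

lemma speed_le (h : IsPolarNormal r α) (x : ℝ) : speed r α x ≤ r x ^ 2 * (r (α x))⁻¹ := by
  have hsupport : r (α x) ≤ r x * Real.cos (α x - x) := by simpa using h.mul_cos_le x (α x)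
  rw [speed, ← div_eq_mul_inv, div_le_div_iff₀ (h.cos_pos x) (h.radius_pos _)]
  nlinarith [h.radius_pos x]

lemma locallyIntegrable_speed (h : IsPolarNormal r α) (hr : Continuous r)
    (hper : Function.Periodic r (2 * π)) : LocallyIntegrable (speed r α) := by
  have hinv : Continuous fun x => (r x)⁻¹ := hr.inv₀ fun x => (h.radius_pos x).ne'
  obtain ⟨C, hC⟩ := ((hper.comp Inv.inv).compact_of_continuous Real.two_pi_pos.ne' hinv).bddAbove
  have hmeas : Measurable (speed r α) :=
    hr.measurable.div (Real.measurable_cos.comp (h.monotone.measurable.sub measurable_id))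
  refine (show Continuous fun x => r x ^ 2 * C by fun_prop).locallyIntegrable.mono
    hmeas.aestronglyMeasurable (Eventually.of_forall fun x => ?_)
  rw [Real.norm_of_nonneg (h.speed_pos x).le]
  calc speed r α x ≤ r x ^ 2 * (r (α x))⁻¹ := h.speed_le x
    _ ≤ r x ^ 2 * C := by gcongr; exact hC (mem_range_self _)
    _ ≤ ‖r x ^ 2 * C‖ := Real.le_norm_self _

end IsPolarNormal

section ArcLength

lemma intervalIntegrable_of_locallyIntegrable {E : Type*} [NormedAddCommGroup E] {f : ℝ → E}
    {μ : Measure ℝ} (hf : LocallyIntegrable f μ) (a b : ℝ) : IntervalIntegrable f μ a b :=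
  (hf.integrableOn_isCompact isCompact_uIcc).intervalIntegrable

variable {v : ℝ → ℝ} {T : ℝ}

lemma strictMono_integral_of_pos (hv : LocallyIntegrable v) (hpos : ∀ x, 0 < v x) :
    StrictMono fun x => ∫ s in (0 : ℝ)..x, v s := by
  have hvi := intervalIntegrable_of_locallyIntegrable hv
  intro x y hxy
  rw [← sub_pos, intervalIntegral.integral_interval_sub_left (hvi _ _) (hvi _ _)]
  exact intervalIntegral.intervalIntegral_pos_of_pos (hvi x y) hpos hxy

lemma exists_orderIso_integral_eq (hv : LocallyIntegrable v) (hpos : ∀ x, 0 < v x)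
    (hper : Function.Periodic v T) (hT : 0 < T) :
    ∃ Ψ : ℝ ≃o ℝ, ∀ t, ∫ s in (0 : ℝ)..Ψ t, v s = t := by
  have hvi := intervalIntegrable_of_locallyIntegrable hv
  have hsurj : Function.Surjective fun x => ∫ s in (0 : ℝ)..x, v s :=
    (intervalIntegral.continuous_primitive hvi 0).surjective
      (hper.tendsto_atTop_intervalIntegral_of_pos' (hvi _ _) hpos hT)
      (hper.tendsto_atBot_intervalIntegral_of_pos' (hvi _ _) hpos hT)
  let A := (strictMono_integral_of_pos hv hpos).orderIsoOfSurjective _ hsurj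
  exact ⟨A.symm, A.apply_symm_apply⟩

theorem exists_orderIso_hasDerivAt_div (hv : LocallyIntegrable v) (hpos : ∀ x, 0 < v x)
    (hper : Function.Periodic v T) (hT : 0 < T) :
    ∃ (Φ : ℝ ≃o ℝ) (ℓ : ℝ), 0 < ℓ ∧ Φ 0 = 0 ∧ (∀ t, Φ (t + 1) = Φ t + T) ∧
      ∀ t, ContinuousAt v (Φ t) → HasDerivAt Φ (ℓ / v (Φ t)) t := by
  obtain ⟨Ψ, hΨ⟩ := exists_orderIso_integral_eq hv hpos hper hT
  have hvi := intervalIntegrable_of_locallyIntegrable hv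
  set A : ℝ → ℝ := fun x => ∫ s in (0 : ℝ)..x, v s
  have hA : StrictMono A := strictMono_integral_of_pos hv hpos
  have hA0 : A 0 = 0 := intervalIntegral.integral_same
  have hℓ : 0 < A T := by simpa [hA0] using hA hT
  let Φ : ℝ ≃o ℝ := (OrderIso.mulLeft₀ (A T) hℓ).trans Ψ
  have hAΦ (t : ℝ) : A (Φ t) = A T * t := hΨ _
  refine ⟨Φ, A T, hℓ, hA.injective ?_, fun t => hA.injective ?_, fun t ht => ?_⟩
  · rw [hAΦ, mul_zero, hA0]
  · have hAadd : A (Φ t + T) = A (Φ t) + A T := by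
      simpa [A] using hper.intervalIntegral_add_eq_add 0 (Φ t) hvi
    rw [hAΦ, hAadd, hAΦ, mul_add_one]
  · have hAderiv : HasDerivAt (fun x => A x / A T) (v (Φ t) / A T) (Φ t) :=
      (intervalIntegral.integral_hasDerivAt_right (hvi _ _)
        hv.aestronglyMeasurable.stronglyMeasurableAtFilter ht).div_const _
    rw [← inv_div]
    refine hAderiv.of_local_left_inverse Φ.continuous.continuousAt
      (div_pos (hpos _) hℓ).ne' (Eventually.of_forall fun y => ?_)
    rw [hAΦ, mul_div_cancel_left₀ _ hℓ.ne']

end ArcLength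

/-- The continuous curve `σ` has constant speed `|ℓ|` along the field of unit vectors `τ`, in the
sense that `σ' = ℓ • τ` off a countable set. -/
structure IsConstSpeed {E : Type*} [NormedAddCommGroup E] [NormedSpace ℝ E]
    (σ τ : ℝ → E) (ℓ : ℝ) : Prop where
  continuous : Continuous σ
  aestronglyMeasurable : AEStronglyMeasurable τ
  norm_eq_one (t : ℝ) : ‖τ t‖ = 1
  countable : {t | ¬ HasDerivAt σ (ℓ • τ t) t}.Countable

namespace IsConstSpeed

variable {E : Type*} [NormedAddCommGroup E] [NormedSpace ℝ E] {σ τ : ℝ → E} {ℓ : ℝ}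

lemma intervalIntegrable (h : IsConstSpeed σ τ ℓ) (a b : ℝ) :
    IntervalIntegrable τ volume a b :=
  (intervalIntegrable_const (c := (1 : ℝ))).mono_fun h.aestronglyMeasurable.restrict
    (Eventually.of_forall fun t => by simp [h.norm_eq_one])

theorem sub_eq_smul_integral [CompleteSpace E] (h : IsConstSpeed σ τ ℓ) (a b : ℝ) :
    σ b - σ a = ℓ • ∫ s in a..b, τ s := by
  rw [← intervalIntegral.integral_smul]
  exact (integral_eq_of_hasDerivAt_off_countable σ (fun s => ℓ • τ s) h.countable
    h.continuous.continuousOn (fun t ht => not_not.1 ht.2) ((h.intervalIntegrable a b).smul ℓ)).symm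

theorem lipschitzWith [CompleteSpace E] (h : IsConstSpeed σ τ ℓ) : LipschitzWith ‖ℓ‖₊ σ := by
  refine LipschitzWith.of_dist_le_mul fun x y => ?_
  rw [dist_eq_norm, h.sub_eq_smul_integral y x, norm_smul, coe_nnnorm, Real.dist_eq]
  gcongr
  simpa using intervalIntegral.norm_integral_le_of_norm_le_const (a := y) (b := x)
    fun s _ => (h.norm_eq_one s).le

theorem integral_norm_deriv (h : IsConstSpeed σ τ ℓ) (a b : ℝ) :
    ∫ s in a..b, ‖deriv σ s‖ = (b - a) * |ℓ| := by
  have hae : ∀ᵐ s, s ∈ uIoc a b → ‖deriv σ s‖ = |ℓ| := by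
    filter_upwards [h.countable.ae_notMem volume] with s hs _
    rw [(not_not.1 hs).deriv, norm_smul, h.norm_eq_one, mul_one, Real.norm_eq_abs]
  rw [intervalIntegral.integral_congr_ae hae, intervalIntegral.integral_const, smul_eq_mul]

end IsConstSpeed

theorem IsPolarNormal.isConstSpeed_comp {r α : ℝ → ℝ} (h : IsPolarNormal r α) (hr : Continuous r)
    {Φ : ℝ ≃o ℝ} {ℓ : ℝ} (p : EuclideanSpace ℝ (Fin 2))
    (hΦ : ∀ t, ContinuousAt (speed r α) (Φ t) → HasDerivAt Φ (ℓ / speed r α (Φ t)) t) :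
    IsConstSpeed (fun t => p + r (Φ t) • unitVec (Φ t))
      (fun t => unitVec (α (Φ t) + π / 2)) ℓ where
  continuous := continuous_const.add
    ((hr.comp Φ.continuous).smul (continuous_unitVec.comp Φ.continuous))
  aestronglyMeasurable := (continuous_unitVec.measurable.comp
    ((h.monotone.comp Φ.monotone).measurable.add_const _)).aestronglyMeasurable
  norm_eq_one _ := norm_unitVec _
  countable := by
    refine (h.monotone.countable_not_continuousAt.preimage Φ.injective).mono
      fun t => mt fun hα => ?_
    have hcurve := h.hasDerivAt_smul_unitVec hr.continuousAt hα
    have hcomp := hcurve.scomp t (hΦ t (h.continuousAt_speed hr.continuousAt hα))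
    rw [smul_smul, div_mul_cancel₀ _ (h.speed_pos _).ne'] at hcomp
    exact hcomp.const_add p

/-- Parametrization of the boundary of a compact convex set `K ⊆ ℝ²` with nonempty
interior: there is a 1-periodic Lipschitz curve `σ`, injective on `[0,1)`, with
`σ([0,1]) = ∂K`, constant speed equal to its length `ℓ > 0`, and
`σ(t) = σ(0) + ℓ ∫₀ᵗ (cos θ(s), sin θ(s)) ds` for a nondecreasing `θ` with
`θ(t+1) − θ(t) = 2π`. -/
theorem stmt_6 (K : Set (EuclideanSpace ℝ (Fin 2)))
    (hK : IsCompact K) (hconv : Convex ℝ K) (hint : (interior K).Nonempty) :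
    ∃ (σ : ℝ → EuclideanSpace ℝ (Fin 2)) (L : ℝ≥0) (ℓ : ℝ) (θ : ℝ → ℝ),
      LipschitzWith L σ ∧ Function.Periodic σ 1 ∧ Set.InjOn σ (Set.Ico 0 1) ∧
      σ '' Set.Icc 0 1 = frontier K ∧ 0 < ℓ ∧
      ℓ = ∫ s in (0:ℝ)..1, ‖deriv σ s‖ ∧
      Monotone θ ∧ (∀ t, θ (t + 1) - θ t = 2 * Real.pi) ∧
      ∀ t ∈ Set.Icc (0:ℝ) 1, σ t = σ 0 + ℓ • ∫ s in (0:ℝ)..t, dirVec θ s := by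
  obtain ⟨p, hp⟩ := hint
  obtain ⟨r, α, h, hr, hrper, hαper, hrange⟩ := exists_isPolarNormal hK hconv hp
  obtain ⟨Φ, ℓ, hℓ, hΦ0, hΦadd, hΦ⟩ := exists_orderIso_hasDerivAt_div
    (h.locallyIntegrable_speed hr hrper) h.speed_pos
    (IsPolarNormal.speed_periodic hrper hαper) Real.two_pi_pos
  have hσ := h.isConstSpeed_comp hr p hΦ
  have hper : Function.Periodic (fun t => p + r (Φ t) • unitVec (Φ t)) 1 := fun t => by
    simp only [hΦadd, hrper _, unitVec_periodic _]
  refine ⟨_, ‖ℓ‖₊, ℓ, fun t => α (Φ t) + π / 2, hσ.lipschitzWith, hper, ?_, ?_, hℓ, ?_,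
    (h.monotone.comp Φ.monotone).add_const _, ?_, fun t _ => ?_⟩
  · have hΦ1 : Φ 1 = 2 * π := by simpa [hΦ0] using hΦadd 0
    exact ((add_right_injective p).comp_injOn (injOn_smul_unitVec h.radius_pos)).comp
      Φ.injective.injOn fun t ht => ⟨hΦ0 ▸ Φ.monotone ht.1, hΦ1 ▸ Φ.strictMono ht.2⟩
  · rw [← hrange, ← Φ.surjective.range_comp]
    simpa only [zero_add, Function.comp_def] using hper.image_Icc one_pos 0
  · rw [hσ.integral_norm_deriv, sub_zero, one_mul, abs_of_pos hℓ]
  · intro t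
    simp only [hΦadd, hαper]
    ring
  · exact eq_add_of_sub_eq' (hσ.sub_eq_smul_integral 0 t)
end

section
/- Let F ⊆ ℝ² be a bounded, closed, convex set. Then the distance function d_F belongs to C^{1,1}_loc(ℝ² \ F), its distributional Laplacian Δd_F is nonnegative a.e. in ℝ² \ F, and Δd_F ∈ L¹(B \ F) for every open ball B containing F compactly, with ∫_{B \ F_η⁺} Δd_F dx ≤ H¹(∂B) + H¹(∂(F_η⁺)) for every small η > 0, where F_η⁺ = {x : dist(x,F) ≤ η}. -/
open Set Filter MeasureTheory Bornology
open scoped Topology ENNReal NNReal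

noncomputable abbrev E2 := EuclideanSpace ℝ (Fin 2)

/-- The Laplacian of a function on ℝ² (sum of second derivatives along the
standard orthonormal basis). -/
noncomputable def lap (f : E2 → ℝ) (x : E2) : ℝ :=
  ∑ i : Fin 2,
    fderiv ℝ (fun y => fderiv ℝ f y (EuclideanSpace.basisFun (Fin 2) ℝ i)) x
      (EuclideanSpace.basisFun (Fin 2) ℝ i)

/-- Distance function to a set. -/
noncomputable def dF (F : Set E2) (x : E2) : ℝ := Metric.infDist x F

/-! Let `p` be the metric projection onto `F`, `d` the distance to `F`, and `η > 0`. The field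
`X x = (x - p x) / max η (d x)` is globally Lipschitz, bounded by `1`, monotone, and equal to `∇d`
on `{η ≤ d}`. Hence `d` is `C^{1,1}` there, and `Δd = div X ≥ 0` almost everywhere on `{η < d}`.

Since `div X ≥ 0` everywhere, `∫_{B ∩ {η < d}} Δd ≤ ∫_B div X`. Testing against Lipschitz cutoffs
equal to `1` on the ball `B` and to `0` outside its `ε`-neighbourhood, and letting `ε → 0`, bounds
the right-hand side by the outer Minkowski content of `B`, which is `2 * π * R = H¹(∂B)`. This
bound does not depend on `η`, and `η → 0` gives `Δd ∈ L¹(B \ F)`. -/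

/-- `p` is a nearest-point selection for `F`. In an inner product space with `F` convex there is at
most one, the metric projection onto `F`. -/
def IsMetricProjection {X : Type*} [PseudoMetricSpace X] (p : X → X) (F : Set X) : Prop :=
  ∀ x, p x ∈ F ∧ dist x (p x) = Metric.infDist x F

theorem exists_isMetricProjection {X : Type*} [PseudoMetricSpace X] [ProperSpace X] {F : Set X}
    (hF : IsClosed F) (hne : F.Nonempty) : ∃ p : X → X, IsMetricProjection p F := by
  choose p hpF hp using hF.exists_infDist_eq_dist hne
  exact ⟨p, fun x => ⟨hpF x, (hp x).symm⟩⟩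

theorem IsMetricProjection.norm_sub_eq {E : Type*} [SeminormedAddCommGroup E] {p : E → E}
    {F : Set E} (hp : IsMetricProjection p F) (x : E) : ‖x - p x‖ = Metric.infDist x F := by
  rw [← dist_eq_norm, (hp x).2]

theorem monotone_inv_max_mul_self {η : ℝ} (hη : 0 < η) : Monotone fun r => (max η r)⁻¹ * r := by
  have hmin : (fun r => (max η r)⁻¹ * r) = fun r => min (η⁻¹ * r) 1 := by
    funext r
    rcases le_total η r with h | h
    · rw [max_eq_right h, inv_mul_cancel₀ (hη.trans_le h).ne', min_eq_right]
      rwa [inv_mul_eq_div, one_le_div hη]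
    · rw [max_eq_left h, min_eq_left]
      rwa [inv_mul_eq_div, div_le_one hη]
  rw [hmin]
  exact (monotone_id.const_mul (inv_pos.2 hη).le).min monotone_const

theorem hasFDerivAt_of_le_of_le {E : Type*} [NormedAddCommGroup E] [NormedSpace ℝ E]
    {f g h : E → ℝ} {f' : E →L[ℝ] ℝ} {x : E} (hf : HasFDerivAt f f' x) (hh : HasFDerivAt h f' x)
    (hfg : ∀ᶠ y in 𝓝 x, f y ≤ g y) (hgh : ∀ᶠ y in 𝓝 x, g y ≤ h y) (hfx : f x = g x)
    (hhx : g x = h x) : HasFDerivAt g f' x := by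
  rw [hasFDerivAt_iff_isLittleO] at hf hh ⊢
  refine (Asymptotics.IsBigO.of_bound 1 ?_).trans_isLittleO (hf.norm_left.add hh.norm_left)
  filter_upwards [hfg, hgh] with y hfy hhy
  rw [hfx, ← hhx, one_mul, Real.norm_of_nonneg (add_nonneg (norm_nonneg _) (norm_nonneg _))]
  simp only [Real.norm_eq_abs]
  refine abs_le.2 ⟨?_, ?_⟩
  · linarith [neg_abs_le (f y - g x - f' (y - x)), abs_nonneg (h y - g x - f' (y - x))]
  · linarith [le_abs_self (h y - g x - f' (y - x)), abs_nonneg (f y - g x - f' (y - x))]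

/-- The unit normal `‖x - p x‖⁻¹ • (x - p x)`, rescaled so as to be Lipschitz across `F`: it is the
gradient of the Huber regularisation of `d = d_F`, equal to `d² / (2 * η) + η / 2` where `d ≤ η`
and to `d` elsewhere. -/
noncomputable def clippedNormal {E : Type*} [SeminormedAddCommGroup E] [NormedSpace ℝ E] (p : E → E)
    (η : ℝ) (x : E) : E :=
  (max η ‖x - p x‖)⁻¹ • (x - p x)

theorem norm_clippedNormal_le {E : Type*} [SeminormedAddCommGroup E] [NormedSpace ℝ E] (p : E → E)
    (η : ℝ) (x : E) : ‖clippedNormal p η x‖ ≤ 1 := by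
  rw [clippedNormal, norm_smul, norm_inv, Real.norm_eq_abs]
  exact inv_mul_le_one_of_le₀ ((le_max_right _ _).trans (le_abs_self _)) (abs_nonneg _)

section MetricProjection

variable {H : Type*} [NormedAddCommGroup H] [InnerProductSpace ℝ H] {F : Set H} {p : H → H}

theorem hasFDerivAt_norm_sub {x a : H} (hxa : x ≠ a) :
    HasFDerivAt (fun y => ‖y - a‖) (innerSL ℝ (‖x - a‖⁻¹ • (x - a))) x := by
  have hpos : 0 < ‖x - a‖ := norm_pos_iff.2 (sub_ne_zero.2 hxa)
  have hsq := ((hasFDerivAt_id x).sub_const a).norm_sq.sqrt (pow_pos hpos 2).ne'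
  simp only [id, Real.sqrt_sq (norm_nonneg _)] at hsq
  refine hsq.congr_fderiv (ContinuousLinearMap.ext fun v => ?_)
  simp
  field_simp

namespace IsMetricProjection

theorem inner_sub_le_zero (hp : IsMetricProjection p F) (hF : Convex ℝ F) (x : H) {w : H}
    (hw : w ∈ F) : inner ℝ (x - p x) (w - p x) ≤ 0 := by
  refine (norm_eq_iInf_iff_real_inner_le_zero hF (hp x).1).1 ?_ w hw
  simp only [hp.norm_sub_eq x, Metric.infDist_eq_iInf, dist_eq_norm]

theorem lipschitzWith_id_sub (hp : IsMetricProjection p F) (hF : Convex ℝ F) :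
    LipschitzWith 1 fun x => x - p x := by
  refine LipschitzWith.of_dist_le_mul fun x y => ?_
  have hx := hp.inner_sub_le_zero hF x (hp y).1
  have hy := hp.inner_sub_le_zero hF y (hp x).1
  set u := x - p x
  set v := y - p y
  have hxy : x - y = (u - v) + (p x - p y) := by simp only [u, v]; abel
  have hcross : 0 ≤ inner ℝ (u - v) (p x - p y) := by
    rw [← neg_sub (p x), inner_neg_right] at hx
    rw [inner_sub_left]
    linarith
  have hsq : ‖u - v‖ ^ 2 ≤ ‖x - y‖ ^ 2 := by
    rw [hxy, norm_add_sq_real]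
    nlinarith [sq_nonneg ‖p x - p y‖]
  simpa [dist_eq_norm] using (sq_le_sq₀ (norm_nonneg _) (norm_nonneg _)).1 hsq

/-- The tangent plane inequality for the convex function `d_F`, multiplied through by
`infDist x F` so that it holds on `F` too. -/
theorem infDist_sq_add_inner_le (hp : IsMetricProjection p F) (hF : Convex ℝ F) (x y : H) :
    Metric.infDist x F ^ 2 + inner ℝ (x - p x) (y - x) ≤
      Metric.infDist x F * Metric.infDist y F := by
  have hsupp := hp.inner_sub_le_zero hF x (hp y).1
  have hsplit : y - x = (y - p y) + (p y - p x) - (x - p x) := by abel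
  have hcs := real_inner_le_norm (x - p x) (y - p y)
  rw [hsplit, inner_sub_right, inner_add_right, real_inner_self_eq_norm_sq, ← hp.norm_sub_eq x,
    ← hp.norm_sub_eq y]
  linarith

theorem inner_clippedNormal_sub_nonneg (hp : IsMetricProjection p F) (hF : Convex ℝ F) {η : ℝ}
    (hη : 0 < η) (x y : H) :
    0 ≤ inner ℝ (clippedNormal p η x - clippedNormal p η y) (x - y) := by
  have hx := hp.infDist_sq_add_inner_le hF x y
  have hy := hp.infDist_sq_add_inner_le hF y x
  rw [← neg_sub x y, inner_neg_right] at hx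
  rw [inner_sub_left]
  simp only [clippedNormal, real_inner_smul_left, hp.norm_sub_eq]
  set a := Metric.infDist x F
  set b := Metric.infDist y F
  have ha : 0 < max η a := lt_max_of_lt_left hη
  have hb : 0 < max η b := lt_max_of_lt_left hη
  have hmono : 0 ≤ ((max η a)⁻¹ * a - (max η b)⁻¹ * b) * (a - b) :=
    monovary_iff_forall_mul_nonneg.1 ((monotone_inv_max_mul_self hη).monovary monotone_id) b a
  have hxa : (max η a)⁻¹ * (a * (a - b)) ≤ (max η a)⁻¹ * inner ℝ (x - p x) (x - y) :=
    mul_le_mul_of_nonneg_left (by linarith) (inv_nonneg.2 ha.le)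
  have hyb : (max η b)⁻¹ * inner ℝ (y - p y) (x - y) ≤ (max η b)⁻¹ * (b * (a - b)) :=
    mul_le_mul_of_nonneg_left (by linarith) (inv_nonneg.2 hb.le)
  linarith

theorem lipschitzWith_clippedNormal (hp : IsMetricProjection p F) (hF : Convex ℝ F) {η : ℝ≥0}
    (hη : 0 < η) : LipschitzWith (2 / η) (clippedNormal p η) := by
  refine LipschitzWith.of_dist_le_mul fun x y => ?_
  have hdist : ‖(x - p x) - (y - p y)‖ ≤ ‖x - y‖ := by
    simpa [dist_eq_norm] using (hp.lipschitzWith_id_sub hF).dist_le_mul x y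
  have hY := norm_clippedNormal_le p η y
  rw [dist_eq_norm, dist_eq_norm]
  simp only [clippedNormal] at hY ⊢
  set u := x - p x
  set v := y - p y
  set a := max (η : ℝ) ‖u‖
  set b := max (η : ℝ) ‖v‖
  have hη' : (0 : ℝ) < η := hη
  have ha : (η : ℝ) ≤ a := le_max_left _ _
  have ha0 : 0 < a := hη'.trans_le ha
  have hb0 : 0 < b := hη'.trans_le (le_max_left _ _)
  have hab : |b - a| ≤ ‖x - y‖ := by
    rw [abs_sub_comm]
    calc |a - b| ≤ |‖u‖ - ‖v‖| := by
          simpa only [a, b, max_comm (η : ℝ)] using abs_max_sub_max_le_abs ‖u‖ ‖v‖ η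
      _ ≤ ‖u - v‖ := abs_norm_sub_norm_le u v
      _ ≤ ‖x - y‖ := hdist
  have hdecomp : a⁻¹ • u - b⁻¹ • v = a⁻¹ • ((u - v) + (b - a) • b⁻¹ • v) := by
    match_scalars <;> field_simp <;> ring
  calc ‖a⁻¹ • u - b⁻¹ • v‖ ≤ a⁻¹ * (‖u - v‖ + |b - a| * ‖b⁻¹ • v‖) := by
        rw [hdecomp, norm_smul, norm_inv, Real.norm_of_nonneg ha0.le]
        gcongr
        exact (norm_add_le _ _).trans_eq (by rw [norm_smul (b - a), Real.norm_eq_abs])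
    _ ≤ (η : ℝ)⁻¹ * (‖x - y‖ + ‖x - y‖ * 1) := by gcongr
    _ = ↑(2 / η) * ‖x - y‖ := by push_cast; ring

theorem hasFDerivAt_infDist (hp : IsMetricProjection p F) (hF : Convex ℝ F) {η : ℝ} (hη : 0 < η)
    {x : H} (hx : η ≤ Metric.infDist x F) :
    HasFDerivAt (Metric.infDist · F) (innerSL ℝ (clippedNormal p η x)) x := by
  have hpos : 0 < Metric.infDist x F := hη.trans_le hx
  have hxp : x ≠ p x := by
    rw [← sub_ne_zero, ← norm_pos_iff, hp.norm_sub_eq x]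
    exact hpos
  have hclip : clippedNormal p η x = ‖x - p x‖⁻¹ • (x - p x) := by
    rw [clippedNormal, max_eq_right (hx.trans_eq (hp.norm_sub_eq x).symm)]
  rw [hclip]
  set n := ‖x - p x‖⁻¹ • (x - p x)
  have htangent : HasFDerivAt (fun y => Metric.infDist x F + innerSL ℝ n (y - x))
      (innerSL ℝ n) x :=
    ((innerSL ℝ n).hasFDerivAt.comp x ((hasFDerivAt_id x).sub_const x)).const_add _
  refine hasFDerivAt_of_le_of_le htangent (hasFDerivAt_norm_sub hxp) (.of_forall fun y => ?_)
    (.of_forall fun y => ?_) (by simp) (hp.norm_sub_eq x).symm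
  · have hsupp := hp.infDist_sq_add_inner_le hF x y
    rw [innerSL_apply_apply, real_inner_smul_left, hp.norm_sub_eq x]
    field_simp
    exact hsupp
  · rw [← dist_eq_norm]
    exact Metric.infDist_le_dist_of_mem (hp x).1

theorem lipschitzOnWith_fderiv_infDist (hp : IsMetricProjection p F) (hF : Convex ℝ F) {η : ℝ≥0}
    (hη : 0 < η) :
    LipschitzOnWith (2 / η) (fderiv ℝ (Metric.infDist · F)) {x | η ≤ Metric.infDist x F} := by
  refine LipschitzOnWith.of_dist_le_mul fun x hx y hy => ?_
  rw [(hp.hasFDerivAt_infDist hF hη hx).fderiv, (hp.hasFDerivAt_infDist hF hη hy).fderiv,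
    dist_eq_norm, ← map_sub, innerSL_apply_norm, ← dist_eq_norm]
  exact (hp.lipschitzWith_clippedNormal hF hη).dist_le_mul x y

end IsMetricProjection

end MetricProjection

section IntegrationByParts

variable {E : Type*} [NormedAddCommGroup E] [NormedSpace ℝ E] [MeasurableSpace E]
  [BorelSpace E] {μ : Measure E} {f φ : E → ℝ} {C D : ℝ≥0}

theorem integrable_mul_fderiv_apply (hφ : Integrable φ μ) (hf : LipschitzWith C f) (v : E) :
    Integrable (fun x => φ x * fderiv ℝ f x v) μ :=
  hφ.mul_bdd (c := C * ‖v‖) (measurable_fderiv_apply_const ℝ f v).aestronglyMeasurable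
    (.of_forall fun x => (fderiv ℝ f x).le_of_opNorm_le (norm_fderiv_le_of_lipschitz ℝ hf) v)

theorem integrable_fderiv_apply_mul [IsFiniteMeasureOnCompacts μ] (hφ : LipschitzWith D φ)
    (hφc : HasCompactSupport φ) (hf : Continuous f) (v : E) :
    Integrable (fun x => fderiv ℝ φ x v * f x) μ := by
  have hsupp : Function.support (fun x => fderiv ℝ φ x v * f x) ⊆ tsupport φ := fun x hx =>
    support_fderiv_subset ℝ fun h => hx (by simp [h])
  rw [← integrableOn_iff_integrable_of_support_subset hsupp]
  exact (hf.continuousOn.integrableOn_compact hφc).bdd_mul (c := D * ‖v‖)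
    (measurable_fderiv_apply_const ℝ φ v).aestronglyMeasurable
    (.of_forall fun x => (fderiv ℝ φ x).le_of_opNorm_le (norm_fderiv_le_of_lipschitz ℝ hφ) v)

theorem integral_mul_fderiv_apply [FiniteDimensional ℝ E] [μ.IsAddHaarMeasure]
    (hf : LipschitzWith C f) (hφ : LipschitzWith D φ) (hφc : HasCompactSupport φ) (v : E) :
    ∫ x, φ x * fderiv ℝ f x v ∂μ = -∫ x, fderiv ℝ φ x v * f x ∂μ := by
  calc ∫ x, φ x * fderiv ℝ f x v ∂μ = ∫ x, lineDeriv ℝ f x v * φ x ∂μ := by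
        refine integral_congr_ae (hf.ae_differentiableAt.mono fun x hx => ?_)
        simp only [hx.lineDeriv_eq_fderiv, mul_comm]
    _ = ∫ x, lineDeriv ℝ φ x (-v) * f x ∂μ := hf.integral_lineDeriv_mul_eq hφ hφc v
    _ = ∫ x, -(fderiv ℝ φ x v * f x) ∂μ := by
        refine integral_congr_ae (hφ.ae_differentiableAt.mono fun x hx => ?_)
        simp only [hx.lineDeriv_eq_fderiv, map_neg, neg_mul]
    _ = -∫ x, fderiv ℝ φ x v * f x ∂μ := integral_neg _

end IntegrationByParts

/-- The divergence of a vector field, as the trace of its derivative; it is `0` where the field is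
not differentiable. -/
noncomputable def divergence {E : Type*} [NormedAddCommGroup E] [NormedSpace ℝ E] (X : E → E)
    (x : E) : ℝ :=
  LinearMap.trace ℝ E (fderiv ℝ X x)

section Divergence

variable {E : Type*} [NormedAddCommGroup E] [InnerProductSpace ℝ E] {X : E → E}

theorem inner_fderiv_apply_nonneg (hX : ∀ x y, 0 ≤ inner ℝ (X x - X y) (x - y)) (x v : E) :
    0 ≤ inner ℝ (fderiv ℝ X x v) v := by
  by_cases hd : DifferentiableAt ℝ X x
  swap
  · simp [fderiv_zero_of_not_differentiableAt hd]
  have hslope : Tendsto (fun t : ℝ => inner ℝ (t⁻¹ • (X (x + t • v) - X x)) v) (𝓝[>] 0)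
      (𝓝 (inner ℝ (fderiv ℝ X x v) v)) :=
    ((hd.hasFDerivAt.hasLineDerivAt v).tendsto_slope_zero_right).inner tendsto_const_nhds
  refine ge_of_tendsto hslope (eventually_mem_nhdsWithin.mono fun t (ht : 0 < t) => ?_)
  have hmono := hX (x + t • v) x
  rw [add_sub_cancel_left, inner_smul_right] at hmono
  rw [real_inner_smul_left]
  exact mul_nonneg (inv_nonneg.2 ht.le) (nonneg_of_mul_nonneg_right hmono ht)

theorem divergence_eq_sum_inner {ι : Type*} [Fintype ι] (b : OrthonormalBasis ι ℝ E) (X : E → E)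
    (x : E) : divergence X x = ∑ i, inner ℝ (b i) (fderiv ℝ X x (b i)) :=
  LinearMap.trace_eq_sum_inner _ b

variable [FiniteDimensional ℝ E]

theorem divergence_nonneg (hX : ∀ x y, 0 ≤ inner ℝ (X x - X y) (x - y)) (x : E) :
    0 ≤ divergence X x := by
  rw [divergence_eq_sum_inner (stdOrthonormalBasis ℝ E)]
  refine Finset.sum_nonneg fun i _ => ?_
  rw [real_inner_comm]
  exact inner_fderiv_apply_nonneg hX x _

theorem norm_divergence_le {C : ℝ≥0} (hX : LipschitzWith C X) (x : E) :
    ‖divergence X x‖ ≤ Module.finrank ℝ E * C := by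
  rw [divergence_eq_sum_inner (stdOrthonormalBasis ℝ E)]
  refine (norm_sum_le_of_le Finset.univ fun i _ => ?_).trans_eq (by simp : ∑ i, (C : ℝ) = _)
  calc ‖inner ℝ (stdOrthonormalBasis ℝ E i) (fderiv ℝ X x (stdOrthonormalBasis ℝ E i))‖
      ≤ ‖fderiv ℝ X x (stdOrthonormalBasis ℝ E i)‖ := by
        simpa using norm_inner_le_norm (𝕜 := ℝ) (stdOrthonormalBasis ℝ E i)
          (fderiv ℝ X x (stdOrthonormalBasis ℝ E i))
    _ ≤ C := by
        simpa using (fderiv ℝ X x).le_of_opNorm_le (norm_fderiv_le_of_lipschitz ℝ hX)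
          (stdOrthonormalBasis ℝ E i)

variable [MeasurableSpace E] [BorelSpace E] {μ : Measure E}

theorem measurable_divergence (X : E → E) : Measurable (divergence X) := by
  have hsum := funext (divergence_eq_sum_inner (stdOrthonormalBasis ℝ E) X)
  rw [hsum]
  exact Finset.measurable_fun_sum _ fun i _ =>
    measurable_const.inner (measurable_fderiv_apply_const ℝ X _)

theorem integrableOn_divergence {C : ℝ≥0} (hX : LipschitzWith C X) {s : Set E} (hs : μ s ≠ ∞) :
    IntegrableOn (divergence X) s μ :=
  Measure.integrableOn_of_bounded hs (measurable_divergence X).aestronglyMeasurable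
    (.of_forall (norm_divergence_le hX))

theorem integral_mul_divergence [μ.IsAddHaarMeasure] {φ : E → ℝ} {C D : ℝ≥0}
    (hX : LipschitzWith C X) (hφ : LipschitzWith D φ) (hφc : HasCompactSupport φ) :
    ∫ x, φ x * divergence X x ∂μ = -∫ x, fderiv ℝ φ x (X x) ∂μ := by
  let b := stdOrthonormalBasis ℝ E
  have hcomp (i) : LipschitzWith (‖innerSL ℝ (b i)‖₊ * C) fun x => inner ℝ (b i) (X x) :=
    (innerSL ℝ (b i)).lipschitz.comp hX
  have hφi : Integrable φ μ := hφ.continuous.integrable_of_hasCompactSupport hφc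
  have hdiv : (fun x => φ x * divergence X x) =ᵐ[μ]
      fun x => ∑ i, φ x * fderiv ℝ (fun y => inner ℝ (b i) (X y)) x (b i) := by
    filter_upwards [hX.ae_differentiableAt] with x hx
    rw [divergence_eq_sum_inner b, Finset.mul_sum]
    refine Finset.sum_congr rfl fun i _ => ?_
    have hderiv : HasFDerivAt (fun y => inner ℝ (b i) (X y))
        ((innerSL ℝ (b i)).comp (fderiv ℝ X x)) x :=
      (innerSL ℝ (b i)).hasFDerivAt.comp x hx.hasFDerivAt
    rw [hderiv.fderiv, ContinuousLinearMap.comp_apply, innerSL_apply_apply]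
  have hflux (x) : fderiv ℝ φ x (X x) = ∑ i, fderiv ℝ φ x (b i) * inner ℝ (b i) (X x) := by
    conv_lhs => rw [← b.sum_repr' (X x)]
    simp only [map_sum, map_smul, smul_eq_mul, mul_comm]
  rw [integral_congr_ae hdiv, integral_finsetSum _ fun i _ =>
    integrable_mul_fderiv_apply hφi (hcomp i) _]
  simp only [hflux]
  rw [integral_finsetSum _ fun i _ =>
    integrable_fderiv_apply_mul hφ hφc (hcomp i).continuous _, ← Finset.sum_neg_distrib]
  exact Finset.sum_congr rfl fun i _ => integral_mul_fderiv_apply (hcomp i) hφ hφc (b i)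

end Divergence

section ThickenedIndicator

theorem lipschitzWith_coe_thickenedIndicator {α : Type*} [PseudoEMetricSpace α] {ε : ℝ}
    (hε : 0 < ε) (K : Set α) :
    LipschitzWith ε.toNNReal⁻¹ fun x => (thickenedIndicator hε K x : ℝ) :=
  lipschitzWith_thickenedIndicator hε K

theorem hasCompactSupport_coe_thickenedIndicator {α : Type*} [PseudoMetricSpace α] [ProperSpace α]
    {K : Set α} {ε : ℝ} (hε : 0 < ε) (hK : IsBounded K) :
    HasCompactSupport fun x => (thickenedIndicator hε K x : ℝ) :=
  .intro (Metric.isCompact_of_isClosed_isBounded Metric.isClosed_cthickening hK.cthickening)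
    fun x hx => by
      rw [thickenedIndicator_zero hε K fun h => hx (Metric.thickening_subset_cthickening ε K h),
        NNReal.coe_zero]

variable {E : Type*} [NormedAddCommGroup E] [NormedSpace ℝ E] {K : Set E} {ε : ℝ}

theorem fderiv_coe_thickenedIndicator_eq_zero (hε : 0 < ε) {x : E}
    (hx : x ∉ Metric.thickening ε K \ K) :
    fderiv ℝ (fun y => (thickenedIndicator hε K y : ℝ)) x = 0 := by
  by_cases hxK : x ∈ K
  · refine IsLocalMax.fderiv_eq_zero (.of_forall fun y => ?_)
    simp only [thickenedIndicator_one hε K hxK]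
    exact thickenedIndicator_le_one hε K y
  · refine IsLocalMin.fderiv_eq_zero (.of_forall fun y => ?_)
    simp only [thickenedIndicator_zero hε K fun h => hx ⟨h, hxK⟩, NNReal.coe_zero]
    exact NNReal.coe_nonneg _

theorem norm_fderiv_coe_thickenedIndicator_le (hε : 0 < ε) (K : Set E) (x : E) :
    ‖fderiv ℝ (fun y => (thickenedIndicator hε K y : ℝ)) x‖ ≤ ε⁻¹ := by
  simpa [hε.le] using
    norm_fderiv_le_of_lipschitz ℝ (x₀ := x) (lipschitzWith_coe_thickenedIndicator hε K)

end ThickenedIndicator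

theorem tendsto_measureReal_thickening_closedBall_sdiff_div {E : Type*} [NormedAddCommGroup E]
    [NormedSpace ℝ E] [FiniteDimensional ℝ E] [MeasurableSpace E] [BorelSpace E] (μ : Measure E)
    [μ.IsAddHaarMeasure] (c : E) {R : ℝ} (hR : 0 ≤ R) :
    Tendsto (fun ε => μ.real (Metric.thickening ε (Metric.closedBall c R) \ Metric.closedBall c R)
      / ε) (𝓝[>] 0)
      (𝓝 (Module.finrank ℝ E * R ^ (Module.finrank ℝ E - 1) * μ.real (Metric.ball (0 : E) 1))) := by
  have hslope := ((hasDerivAt_pow (Module.finrank ℝ E) R).tendsto_slope_zero_right).mul_const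
    (μ.real (Metric.ball (0 : E) 1))
  refine hslope.congr' (eventually_mem_nhdsWithin.mono fun ε (hε : 0 < ε) => ?_)
  have hball : μ.real (Metric.ball c (ε + R)) =
      (ε + R) ^ Module.finrank ℝ E * μ.real (Metric.ball (0 : E) 1) := by
    rw [measureReal_def, Measure.addHaar_ball_of_pos μ c (by linarith), ENNReal.toReal_mul,
      ENNReal.toReal_ofReal (by positivity), measureReal_def]
  have hsub : Metric.closedBall c R ⊆ Metric.ball c (ε + R) :=
    Metric.closedBall_subset_ball (by linarith)
  simp only [thickening_closedBall hε hR]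
  rw [measureReal_sdiff hsub measurableSet_closedBall, Measure.addHaar_real_closedBall μ c hR,
    hball, smul_eq_mul, add_comm R]
  ring

section DivergenceTheorem

variable {E : Type*} [NormedAddCommGroup E] [InnerProductSpace ℝ E] [FiniteDimensional ℝ E]
  [MeasurableSpace E] [BorelSpace E] {μ : Measure E} [μ.IsAddHaarMeasure] {X : E → E} {K : Set E}
  {C : ℝ≥0} {M : ℝ}

theorem integral_thickenedIndicator_mul_divergence_le (hX : LipschitzWith C X)
    (hM : ∀ x, ‖X x‖ ≤ M) (hK : IsCompact K) {ε : ℝ} (hε : 0 < ε) :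
    ∫ x, (thickenedIndicator hε K x : ℝ) * divergence X x ∂μ ≤
      M * (μ.real (Metric.thickening ε K \ K) / ε) := by
  set S := Metric.thickening ε K \ K
  have hS : MeasurableSet S := Metric.isOpen_thickening.measurableSet.diff hK.measurableSet
  have hSfin : μ S ≠ ∞ :=
    measure_ne_top_of_subset sdiff_subset hK.isBounded.thickening.measure_lt_top.ne
  have hflux (x) : ‖fderiv ℝ (fun y => (thickenedIndicator hε K y : ℝ)) x (X x)‖ ≤
      S.indicator (fun _ => ε⁻¹ * M) x := by
    by_cases hx : x ∈ S
    · rw [indicator_of_mem hx]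
      exact ContinuousLinearMap.le_of_opNorm_le_of_le _
        (norm_fderiv_coe_thickenedIndicator_le hε K x) (hM x)
    · rw [indicator_of_notMem hx, fderiv_coe_thickenedIndicator_eq_zero hε hx]
      simp
  rw [integral_mul_divergence hX (lipschitzWith_coe_thickenedIndicator hε K)
    (hasCompactSupport_coe_thickenedIndicator hε hK.isBounded)]
  calc _ ≤ _ := neg_le_abs _
    _ ≤ ∫ x, S.indicator (fun _ => ε⁻¹ * M) x ∂μ :=
        norm_integral_le_of_norm_le ((integrable_indicator_iff hS).2 (integrableOn_const hSfin))
          (.of_forall hflux)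
    _ = M * (μ.real S / ε) := by
        rw [integral_indicator_const _ hS, smul_eq_mul]
        ring

/-- The limit `L` is the outer Minkowski content of `K`, which bounds its perimeter from above. -/
theorem setIntegral_divergence_le_of_tendsto {L : ℝ} (hX : LipschitzWith C X)
    (hM : ∀ x, ‖X x‖ ≤ M) (hK : IsCompact K)
    (hL : Tendsto (fun ε => μ.real (Metric.thickening ε K \ K) / ε) (𝓝[>] 0) (𝓝 L)) :
    ∫ x in K, divergence X x ∂μ ≤ M * L := by
  obtain ⟨u, hu_anti, hu_pos, hu⟩ := exists_seq_strictAnti_tendsto (0 : ℝ)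
  have hu' : Tendsto u atTop (𝓝[>] 0) :=
    tendsto_nhdsWithin_iff.2 ⟨hu, .of_forall hu_pos⟩
  have hφ (n) : Integrable (fun x => (thickenedIndicator (hu_pos n) K x : ℝ)) μ :=
    (lipschitzWith_coe_thickenedIndicator _ _).continuous.integrable_of_hasCompactSupport
      (hasCompactSupport_coe_thickenedIndicator _ hK.isBounded)
  have hlim : Tendsto (fun n => ∫ x, (thickenedIndicator (hu_pos n) K x : ℝ) * divergence X x ∂μ)
      atTop (𝓝 (∫ x, K.indicator (divergence X) x ∂μ)) := by
    refine tendsto_integral_of_dominated_convergence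
      (fun x => ‖(thickenedIndicator (hu_pos 0) K x : ℝ) * divergence X x‖) (fun n => ?_) ?_
      (fun n => .of_forall fun x => ?_) (.of_forall fun x => ?_)
    · exact (hφ n).aestronglyMeasurable.mul (measurable_divergence X).aestronglyMeasurable
    · exact ((hφ 0).mul_bdd (measurable_divergence X).aestronglyMeasurable
        (.of_forall (norm_divergence_le hX))).norm
    · rw [norm_mul, norm_mul, NNReal.norm_eq, NNReal.norm_eq]
      gcongr
      exact thickenedIndicator_mono _ _ (hu_anti.antitone n.zero_le) K x
    · have hind := tendsto_pi_nhds.1 (thickenedIndicator_tendsto_indicator_closure hu_pos hu K) x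
      rw [hK.isClosed.closure_eq] at hind
      have := (NNReal.tendsto_coe.2 hind).mul_const (divergence X x)
      by_cases hx : x ∈ K <;> simpa [hx] using this
  rw [← integral_indicator hK.measurableSet]
  exact le_of_tendsto_of_tendsto' hlim ((hL.comp hu').const_mul M) fun n =>
    integral_thickenedIndicator_mul_divergence_le hX hM hK (hu_pos n)

theorem setIntegral_closedBall_divergence_le (hX : LipschitzWith C X) (hM : ∀ x, ‖X x‖ ≤ M)
    (c : E) {R : ℝ} (hR : 0 ≤ R) :
    ∫ x in Metric.closedBall c R, divergence X x ∂μ ≤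
      M * (Module.finrank ℝ E * R ^ (Module.finrank ℝ E - 1) * μ.real (Metric.ball (0 : E) 1)) :=
  setIntegral_divergence_le_of_tendsto hX hM (isCompact_closedBall c R)
    (tendsto_measureReal_thickening_closedBall_sdiff_div μ c hR)

end DivergenceTheorem

section HausdorffLength

variable {X : Type*} [MetricSpace X] [MeasurableSpace X] [BorelSpace X]

theorem edist_le_hausdorffMeasure_of_isPreconnected {s : Set X} (hs : IsPreconnected s) {x y : X}
    (hx : x ∈ s) (hy : y ∈ s) : edist x y ≤ μH[1] s := by
  have hcover : Icc 0 (dist x y) ⊆ (dist x ·) '' s := by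
    have h := hs.intermediate_value hx hy (f := (dist x ·)) (by fun_prop)
    rwa [dist_self] at h
  calc edist x y = μH[1] (Icc 0 (dist x y)) := by
        rw [hausdorffMeasure_real, Real.volume_Icc, sub_zero, edist_dist]
    _ ≤ μH[1] ((dist x ·) '' s) := measure_mono hcover
    _ ≤ μH[1] s := by
        simpa using (LipschitzWith.dist_right x).hausdorffMeasure_image_le zero_le_one s

theorem edist_le_hausdorffMeasure_image_Ico {γ : ℝ → X} {a b : ℝ} (hab : a ≤ b)
    (hγ : ContinuousOn γ (Icc a b)) : edist (γ b) (γ a) ≤ μH[1] (γ '' Ico a b) := by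
  calc edist (γ b) (γ a) ≤ μH[1] (γ '' Icc a b) :=
        edist_le_hausdorffMeasure_of_isPreconnected (isPreconnected_Icc.image γ hγ)
          (mem_image_of_mem γ (right_mem_Icc.2 hab)) (mem_image_of_mem γ (left_mem_Icc.2 hab))
    _ = μH[1] (insert (γ b) (γ '' Ico a b)) := by
        rw [← Ico_insert_right hab, image_insert_eq]
    _ = μH[1] (γ '' Ico a b) := by
        have := Measure.nullSingletonClass_hausdorff X one_pos
        exact measure_congr (insert_ae_eq_self _ _)

theorem eVariationOn_le_hausdorffMeasure_image_Ico {γ : ℝ → X} {a b : ℝ}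
    (hγ : ContinuousOn γ (Icc a b)) (hinj : InjOn γ (Ico a b)) :
    eVariationOn γ (Icc a b) ≤ μH[1] (γ '' Ico a b) := by
  refine iSup_le fun ⟨n, u, hu, hmem⟩ => ?_
  have hsub (i) : Ico (u i) (u (i + 1)) ⊆ Ico a b := Ico_subset_Ico (hmem i).1 (hmem (i + 1)).2
  have hsub' (i) : Icc (u i) (u (i + 1)) ⊆ Icc a b := Icc_subset_Icc (hmem i).1 (hmem (i + 1)).2
  have hdisj : Pairwise (Function.onFun Disjoint fun i => γ '' Ico (u i) (u (i + 1))) :=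
    fun i j hij => (hu.pairwise_disjoint_on_Ico_succ hij).image hinj (hsub i) (hsub j)
  have hmeas (i) : MeasurableSet (γ '' Ico (u i) (u (i + 1))) :=
    measurableSet_Ico.image_of_continuousOn_injOn (hγ.mono (Ico_subset_Icc_self.trans (hsub' i)))
      (hinj.mono (hsub i))
  calc ∑ i ∈ Finset.range n, edist (γ (u (i + 1))) (γ (u i))
      ≤ ∑ i ∈ Finset.range n, μH[1] (γ '' Ico (u i) (u (i + 1))) :=
        Finset.sum_le_sum fun i _ =>
          edist_le_hausdorffMeasure_image_Ico (hu i.le_succ) (hγ.mono (hsub' i))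
    _ = μH[1] (⋃ i ∈ Finset.range n, γ '' Ico (u i) (u (i + 1))) :=
        (measure_biUnion_finset (hdisj.set_pairwise _) fun i _ => hmeas i).symm
    _ ≤ μH[1] (γ '' Ico a b) := measure_mono (iUnion₂_subset fun i _ => image_mono (hsub i))

end HausdorffLength

section Circle

theorem dist_circleMap_add (c : ℂ) (R θ h : ℝ) :
    dist (circleMap c R (θ + h)) (circleMap c R θ) = |R| * |2 * Real.sin (h / 2)| := by
  have hfactor : circleMap c R (θ + h) - circleMap c R θ =
      R * Complex.exp (θ * Complex.I) * (Complex.exp (Complex.I * h) - 1) := by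
    simp only [circleMap, Complex.ofReal_add, add_mul, Complex.exp_add, mul_comm Complex.I]
    ring
  rw [dist_eq_norm, hfactor, norm_mul, norm_mul, Complex.norm_exp_ofReal_mul_I,
    Complex.norm_exp_I_mul_ofReal_sub_one, Complex.norm_real, mul_one, Real.norm_eq_abs,
    Real.norm_eq_abs]

theorem tendsto_natCast_mul_sin_pi_div :
    Tendsto (fun n : ℕ => n * Real.sin (Real.pi / n)) atTop (𝓝 Real.pi) := by
  have hsinc : Tendsto (fun n : ℕ => Real.pi * Real.sinc (Real.pi / n)) atTop (𝓝 Real.pi) := by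
    simpa using ((Real.continuous_sinc.tendsto 0).comp
      (tendsto_const_div_atTop_nhds_zero_nat Real.pi)).const_mul Real.pi
  refine hsinc.congr' ?_
  filter_upwards [eventually_gt_atTop 0] with n hn
  rw [Real.sinc_of_ne_zero (by positivity)]
  field_simp

theorem ofReal_le_eVariationOn_circleMap (c : ℂ) {R : ℝ} (hR : 0 ≤ R) :
    ENNReal.ofReal (2 * Real.pi * R) ≤ eVariationOn (circleMap c R) (Icc 0 (2 * Real.pi)) := by
  have hlim : Tendsto (fun n : ℕ => 2 * (n * Real.sin (Real.pi / n)) * R) atTop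
      (𝓝 (2 * Real.pi * R)) := (tendsto_natCast_mul_sin_pi_div.const_mul 2).mul_const R
  refine le_of_tendsto (ENNReal.tendsto_ofReal hlim) ?_
  filter_upwards [eventually_gt_atTop 0] with n hn
  -- The perimeter of the inscribed regular `n`-gon.
  set h := 2 * Real.pi / n with hh
  have hsin : 0 ≤ Real.sin (Real.pi / n) :=
    Real.sin_nonneg_of_nonneg_of_le_pi (by positivity)
      (div_le_self Real.pi_pos.le (by exact_mod_cast hn))
  have hside (i : ℕ) : edist (circleMap c R ((i + 1 : ℕ) * h)) (circleMap c R (i * h)) =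
      ENNReal.ofReal (R * (2 * Real.sin (Real.pi / n))) := by
    rw [edist_dist, Nat.cast_add_one, add_one_mul, dist_circleMap_add, abs_of_nonneg hR,
      show h / 2 = Real.pi / n by rw [hh]; ring, abs_of_nonneg (by positivity)]
  have hmem (i : ℕ) (hi : i ≤ n) : i * h ∈ Icc 0 (2 * Real.pi) := by
    refine ⟨by positivity, ?_⟩
    calc i * h ≤ n * h := by gcongr
      _ = 2 * Real.pi := by rw [hh]; field_simp
  have hmono : Monotone fun i : ℕ => i * h := fun i j hij => by dsimp only; gcongr
  calc ENNReal.ofReal (2 * (n * Real.sin (Real.pi / n)) * R)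
      = ∑ i ∈ Finset.range n,
          edist (circleMap c R ((i + 1 : ℕ) * h)) (circleMap c R (i * h)) := by
        simp only [hside, Finset.sum_const, Finset.card_range, nsmul_eq_mul]
        rw [← ENNReal.ofReal_natCast, ← ENNReal.ofReal_mul (by positivity)]
        ring_nf
    _ ≤ eVariationOn (circleMap c R) (Icc 0 (2 * Real.pi)) :=
        eVariationOn.sum_le_of_monotoneOn_Iic (f := circleMap c R) (u := fun i : ℕ => i * h)
          (hmono.monotoneOn _) hmem

theorem hausdorffMeasure_sphere_complex (c : ℂ) {R : ℝ} (hR : 0 ≤ R) :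
    μH[1] (Metric.sphere c R) = ENNReal.ofReal (2 * Real.pi * R) := by
  apply le_antisymm
  · calc μH[1] (Metric.sphere c R) = μH[1] (circleMap c R '' Ioc 0 (2 * Real.pi)) := by
          rw [image_circleMap_Ioc, abs_of_nonneg hR]
      _ ≤ R.nnabs * μH[1] (Ioc 0 (2 * Real.pi)) := by
          simpa using (lipschitzWith_circleMap c R).hausdorffMeasure_image_le zero_le_one
            (Ioc 0 (2 * Real.pi))
      _ = ENNReal.ofReal (2 * Real.pi * R) := by
          rw [hausdorffMeasure_real, Real.volume_Ioc, sub_zero, mul_comm,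
            ENNReal.ofReal_mul Real.two_pi_pos.le, Real.nnabs_of_nonneg hR]
          rfl
  · rcases hR.eq_or_lt with rfl | hR
    · simp
    calc ENNReal.ofReal (2 * Real.pi * R) ≤ _ := ofReal_le_eVariationOn_circleMap c hR.le
      _ ≤ μH[1] (circleMap c R '' Ico 0 (2 * Real.pi)) :=
          eVariationOn_le_hausdorffMeasure_image_Ico (continuous_circleMap c R).continuousOn
            (injOn_circleMap_of_abs_sub_le' hR.ne' (by simp))
      _ ≤ μH[1] (Metric.sphere c R) :=
          measure_mono (image_subset_iff.2 fun θ _ => circleMap_mem_sphere c hR.le θ)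

theorem hausdorffMeasure_sphere_of_finrank_eq_two {E : Type*} [NormedAddCommGroup E]
    [InnerProductSpace ℝ E] [MeasurableSpace E] [BorelSpace E] (hE : Module.finrank ℝ E = 2)
    (c : E) {R : ℝ} (hR : 0 ≤ R) :
    μH[1] (Metric.sphere c R) = ENNReal.ofReal (2 * Real.pi * R) := by
  have : FiniteDimensional ℝ E := .of_finrank_pos (by lia)
  let e : ℂ ≃ₗᵢ[ℝ] E := Complex.orthonormalBasisOneI.repr.trans
    ((stdOrthonormalBasis ℝ E).reindex (finCongr hE)).repr.symm
  rw [← hausdorffMeasure_sphere_complex (e.symm c) hR,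
    ← e.isometry.hausdorffMeasure_image (.inl zero_le_one), e.image_sphere, e.apply_symm_apply]

end Circle

section Laplacian

theorem lap_eq_divergence {f : E2 → ℝ} {X : E2 → E2} {x : E2}
    (hf : ∀ᶠ y in 𝓝 x, HasFDerivAt f (innerSL ℝ (X y)) y) (hX : DifferentiableAt ℝ X x) :
    lap f x = divergence X x := by
  rw [divergence_eq_sum_inner (EuclideanSpace.basisFun (Fin 2) ℝ)]
  refine Finset.sum_congr rfl fun i _ => ?_
  set e := EuclideanSpace.basisFun (Fin 2) ℝ i
  have hpartial : (fun y => fderiv ℝ f y e) =ᶠ[𝓝 x] fun y => innerSL ℝ e (X y) :=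
    hf.mono fun y hy => by
      simp only [hy.fderiv, innerSL_apply_apply, real_inner_comm]
  have hderiv : HasFDerivAt (fun y => innerSL ℝ e (X y)) ((innerSL ℝ e).comp (fderiv ℝ X x)) x :=
    (innerSL ℝ e).hasFDerivAt.comp x hX.hasFDerivAt
  rw [hpartial.fderiv_eq, hderiv.fderiv, ContinuousLinearMap.comp_apply,
    innerSL_apply_apply]

theorem dF_empty : dF ∅ = fun _ => 0 :=
  funext fun _ => Metric.infDist_empty

theorem lap_dF_empty : lap (dF ∅) = 0 := by
  ext x
  simp [lap, dF_empty]

variable {F : Set E2}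

theorem lap_dF_ae_eq_divergence {p : E2 → E2} (hp : IsMetricProjection p F) (hF : Convex ℝ F)
    {η : ℝ} (hη : 0 < η) :
    lap (dF F) =ᵐ[volume.restrict {y | Metric.infDist y F ≤ η}ᶜ]
      divergence (clippedNormal p η) := by
  lift η to ℝ≥0 using hη.le
  have hcont := Metric.continuous_infDist_pt F
  refine (ae_restrict_iff' (isClosed_le hcont continuous_const).measurableSet.compl).2 ?_
  filter_upwards [(hp.lipschitzWith_clippedNormal hF hη).ae_differentiableAt] with x hx hηx
  refine lap_eq_divergence ?_ hx
  filter_upwards [hcont.continuousAt.eventually (lt_mem_nhds (not_le.1 hηx))] with y hy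
    using hp.hasFDerivAt_infDist hF hη hy.le

theorem ae_lap_dF_nonneg (hFc : IsClosed F) (hF : Convex ℝ F) : ∀ᵐ x, x ∉ F → 0 ≤ lap (dF F) x := by
  rcases F.eq_empty_or_nonempty with rfl | hne
  · simp [lap_dF_empty]
  obtain ⟨p, hp⟩ := exists_isMetricProjection hFc hne
  have hcover : Fᶜ ⊆ ⋃ n : ℕ, {y | Metric.infDist y F ≤ 1 / ((n : ℝ) + 1)}ᶜ := fun x hx => by
    obtain ⟨n, hn⟩ := exists_nat_one_div_lt ((hFc.notMem_iff_infDist_pos hne).1 hx)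
    exact mem_iUnion.2 ⟨n, not_le.2 hn⟩
  refine (ae_restrict_iff' hFc.measurableSet.compl).1 <|
    ae_restrict_of_ae_restrict_of_subset hcover <| (ae_restrict_iUnion_iff _ _).2 fun n => ?_
  have hn : (0 : ℝ) < 1 / (n + 1) := Nat.one_div_pos_of_nat
  filter_upwards [lap_dF_ae_eq_divergence hp hF hn] with x hx
  rw [hx]
  exact divergence_nonneg (hp.inner_clippedNormal_sub_nonneg hF hn) x

theorem exists_lipschitzOnWith_fderiv_dF (hFc : IsClosed F) (hF : Convex ℝ F) {x : E2}
    (hx : x ∉ F) :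
    ∃ ε > 0, ∃ L : ℝ≥0, Metric.ball x ε ⊆ Fᶜ ∧ DifferentiableOn ℝ (dF F) (Metric.ball x ε) ∧
      LipschitzOnWith L (fderiv ℝ (dF F)) (Metric.ball x ε) := by
  rcases F.eq_empty_or_nonempty with rfl | hne
  · exact ⟨1, one_pos, 0, by simp, by simp [dF_empty], by simp [dF_empty]⟩
  obtain ⟨p, hp⟩ := exists_isMetricProjection hFc hne
  set η := Metric.infNndist x F / 2 with hη
  have hpos : 0 < η := half_pos (NNReal.coe_pos.1 ((hFc.notMem_iff_infDist_pos hne).1 hx))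
  have hdist : (η : ℝ) = Metric.infDist x F / 2 := by
    rw [hη, NNReal.coe_div, Metric.coe_infNndist, NNReal.coe_ofNat]
  have hball : Metric.ball x η ⊆ {y | η ≤ Metric.infDist y F} := fun y hy => by
    have := Metric.infDist_le_infDist_add_dist (s := F) (x := x) (y := y)
    rw [Metric.mem_ball'] at hy
    rw [mem_ofPred_eq]
    linarith
  refine ⟨η, hpos, 2 / η, fun y hy => ?_, fun y hy => ?_,
    (hp.lipschitzOnWith_fderiv_infDist hF hpos).mono hball⟩
  · exact (hFc.notMem_iff_infDist_pos hne).2 ((NNReal.coe_pos.2 hpos).trans_le (hball hy))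
  · exact (hp.hasFDerivAt_infDist hF hpos (hball hy)).differentiableAt.differentiableWithinAt

theorem integrableOn_lap_dF_ball_sdiff (hFc : IsClosed F) (hF : Convex ℝ F) {η : ℝ} (hη : 0 < η)
    (c : E2) (R : ℝ) :
    IntegrableOn (lap (dF F)) (Metric.ball c R \ {y | Metric.infDist y F ≤ η}) := by
  rcases F.eq_empty_or_nonempty with rfl | hne
  · simp [Metric.infDist_empty, hη.le]
  obtain ⟨p, hp⟩ := exists_isMetricProjection hFc hne
  have hlap := ae_restrict_of_ae_restrict_of_subset
    (sdiff_subset_compl (Metric.ball c R) {y | Metric.infDist y F ≤ η})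
    (lap_dF_ae_eq_divergence hp hF hη)
  lift η to ℝ≥0 using hη.le
  exact (integrableOn_congr_fun_ae hlap).2 (integrableOn_divergence
    (hp.lipschitzWith_clippedNormal hF hη)
    (measure_ne_top_of_subset sdiff_subset measure_ball_lt_top.ne))

theorem setIntegral_lap_dF_ball_sdiff_le (hFc : IsClosed F) (hF : Convex ℝ F) {η : ℝ} (hη : 0 < η)
    (c : E2) (R : ℝ) :
    ∫ x in Metric.ball c R \ {y | Metric.infDist y F ≤ η}, lap (dF F) x ≤
      (μH[1] (Metric.sphere c R)).toReal := by
  rcases F.eq_empty_or_nonempty with rfl | hne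
  · simp [Metric.infDist_empty, hη.le]
  rcases lt_or_ge R 0 with hR | hR
  · simp [Metric.ball_eq_empty.2 hR.le]
  obtain ⟨p, hp⟩ := exists_isMetricProjection hFc hne
  have hlap := ae_restrict_of_ae_restrict_of_subset
    (sdiff_subset_compl (Metric.ball c R) {y | Metric.infDist y F ≤ η})
    (lap_dF_ae_eq_divergence hp hF hη)
  lift η to ℝ≥0 using hη.le
  have hX := hp.lipschitzWith_clippedNormal hF hη
  calc _ = ∫ x in Metric.ball c R \ {y | Metric.infDist y F ≤ η},
          divergence (clippedNormal p η) x := integral_congr_ae hlap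
    _ ≤ ∫ x in Metric.closedBall c R, divergence (clippedNormal p η) x :=
        setIntegral_mono_set (integrableOn_divergence hX measure_closedBall_lt_top.ne)
          (.of_forall (divergence_nonneg (hp.inner_clippedNormal_sub_nonneg hF hη)))
          (sdiff_subset.trans Metric.ball_subset_closedBall).eventuallyLE
    _ ≤ 1 * (2 * R ^ (2 - 1) * volume.real (Metric.ball (0 : E2) 1)) := by
        simpa only [finrank_euclideanSpace_fin, Nat.cast_ofNat] using
          setIntegral_closedBall_divergence_le hX (norm_clippedNormal_le p η) c hR
    _ = 2 * Real.pi * R := by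
        simp only [measureReal_def, EuclideanSpace.volume_ball_fin_two, ENNReal.ofReal_one, one_pow,
          one_mul, pow_one, Nat.add_one_sub_one, ENNReal.toReal_ofReal Real.pi_pos.le]
        ring
    _ = (μH[1] (Metric.sphere c R)).toReal := by
        rw [hausdorffMeasure_sphere_of_finrank_eq_two finrank_euclideanSpace_fin c hR,
          ENNReal.toReal_ofReal (by positivity)]

theorem integrableOn_lap_dF (hFc : IsClosed F) (hF : Convex ℝ F) (c : E2) (R : ℝ) :
    IntegrableOn (lap (dF F)) (Metric.ball c R \ F) := by
  rcases F.eq_empty_or_nonempty with rfl | hne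
  · rw [lap_dF_empty]
    exact integrableOn_zero
  have hS : MeasurableSet (Metric.ball c R \ F) :=
    Metric.isOpen_ball.measurableSet.diff hFc.measurableSet
  let K : ℕ → Set E2 := fun n => {y | Metric.infDist y F ≤ 1 / ((n : ℝ) + 1)}
  have hK (n) : MeasurableSet (K n) :=
    (isClosed_le (Metric.continuous_infDist_pt F) continuous_const).measurableSet
  have hFK (n) : F ⊆ K n := fun x hx => by
    simp only [K, mem_ofPred_eq, Metric.infDist_zero_of_mem hx]
    positivity
  have hcover : AECover (volume.restrict (Metric.ball c R \ F)) atTop fun n => (K n)ᶜ := by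
    refine ⟨(ae_restrict_iff' hS).2 (.of_forall fun x hx => ?_), fun n => (hK n).compl⟩
    have hpos := (hFc.notMem_iff_infDist_pos hne).1 hx.2
    filter_upwards [tendsto_one_div_add_atTop_nhds_zero_nat.eventually (gt_mem_nhds hpos)]
      with n hn using not_le.2 hn
  have hrestrict (n) : (volume.restrict (Metric.ball c R \ F)).restrict (K n)ᶜ =
      volume.restrict (Metric.ball c R \ K n) := by
    rw [Measure.restrict_restrict (hK n).compl, inter_comm, ← sdiff_eq, sdiff_sdiff,
      union_eq_self_of_subset_left (hFK n)]
  refine hcover.integrable_of_integral_bounded_of_nonneg_ae (μH[1] (Metric.sphere c R)).toReal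
    (fun n => ?_) ((ae_restrict_iff' hS).2 ?_) (.of_forall fun n => ?_)
  · rw [IntegrableOn, hrestrict]
    exact integrableOn_lap_dF_ball_sdiff hFc hF Nat.one_div_pos_of_nat c R
  · exact (ae_lap_dF_nonneg hFc hF).mono fun x hx hxS => hx hxS.2
  · rw [hrestrict]
    exact setIntegral_lap_dF_ball_sdiff_le hFc hF Nat.one_div_pos_of_nat c R

end Laplacian

theorem stmt_12_general (F : Set E2) (hFc : IsClosed F) (hFconv : Convex ℝ F) :
    (∀ x ∉ F, ∃ ε > 0, ∃ L : ℝ≥0,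
        Metric.ball x ε ⊆ Fᶜ ∧
        DifferentiableOn ℝ (dF F) (Metric.ball x ε) ∧
        LipschitzOnWith L (fderiv ℝ (dF F)) (Metric.ball x ε)) ∧
    (∀ᵐ x ∂(volume : Measure E2), x ∉ F → 0 ≤ lap (dF F) x) ∧
    (∀ (c : E2) (R : ℝ), IntegrableOn (lap (dF F)) (Metric.ball c R \ F)) ∧
    (∀ (c : E2) (R : ℝ), ∀ η > 0,
        ∫ x in Metric.ball c R \ {y | Metric.infDist y F ≤ η}, lap (dF F) x ≤
          (μH[1] (Metric.sphere c R)).toReal) :=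
  ⟨fun _ => exists_lipschitzOnWith_fderiv_dF hFc hFconv, ae_lap_dF_nonneg hFc hFconv,
    integrableOn_lap_dF hFc hFconv,
    fun c R _ hη => setIntegral_lap_dF_ball_sdiff_le hFc hFconv hη c R⟩

/-- For a bounded closed convex `F ⊆ ℝ²`: the distance function `d_F` is
`C^{1,1}_loc` outside `F`, its Laplacian is nonnegative a.e. outside `F` and is
integrable on `B \ F` for every ball `B ⊇ F`, with the integral bound
`∫_{B \ F_η⁺} Δd_F ≤ H¹(∂B) + H¹(∂(F_η⁺))` for every `η > 0`. -/
theorem stmt_12 (F : Set E2) (hFb : IsBounded F) (hFc : IsClosed F) (hFconv : Convex ℝ F) :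
    (∀ x ∉ F, ∃ ε > 0, ∃ L : ℝ≥0,
        Metric.ball x ε ⊆ Fᶜ ∧
        DifferentiableOn ℝ (dF F) (Metric.ball x ε) ∧
        LipschitzOnWith L (fun y => fderiv ℝ (dF F) y) (Metric.ball x ε)) ∧
    (∀ᵐ x ∂(volume : Measure E2), x ∉ F → 0 ≤ lap (dF F) x) ∧
    (∀ (c : E2) (R : ℝ), F ⊆ Metric.ball c R →
        IntegrableOn (lap (dF F)) (Metric.ball c R \ F)) ∧
    (∀ (c : E2) (R : ℝ), F ⊆ Metric.ball c R → ∀ η > 0,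
        ∫ x in Metric.ball c R \ {y | Metric.infDist y F ≤ η}, lap (dF F) x ≤
          (μH[1] (Metric.sphere c R)).toReal
            + (μH[1] (frontier {y | Metric.infDist y F ≤ η})).toReal) := by
  obtain ⟨hC11, hnonneg, hint, hle⟩ := stmt_12_general F hFc hFconv
  exact ⟨hC11, hnonneg, fun c R _ => hint c R, fun c R _ η hη =>
    (hle c R η hη).trans (le_add_of_nonneg_right ENNReal.toReal_nonneg)⟩
end
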